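/- Assume θ is C¹ on (0,∞)², positive, positively homogeneous of degree one, and concave. Let n ≥ 1 and let Q_n be the n-dimensional hypercube graph (the n-fold Cartesian box product of K₂, with vertex set {0,1}^n and edges between vertices at Hamming distance 1). If κ ∈ ℝ satisfies Γ₂^{K₂}(p,f,f) ≥ κ Γ₁^{K₂}(p,f,f) for all p ∈ (0,∞)² and f ∈ ℝ², then Γ₂^{Q_n}(p,f,f) ≥ κ Γ₁^{Q_n}(p,f,f) for all p ∈ (0,∞)^{{0,1}^n} and f ∈ ℝ^{{0,1}^n}. -/

import Mathlib

/-! Along an edge, `η_{uv}(p) = p_u - p_v`, so every derivative of `η` occurring in `Γ₂` is the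
adjacency indicator (`Gamma2_eq`). On the hypercube the triple sum in `Γ₂` then becomes a sum over
a vertex `i` and two directions `a`, `b` (`Gamma2_cube`).

The terms with `a = b` form, edge by edge, the quantity `Γ₂` of `K₂`, and the hypothesis on `K₂`
bounds them below by `κ Γ₁`.

The terms with `a ≠ b` group into four-cycles and contribute a nonnegative amount (`square_ineq`).
Indeed, concavity and homogeneity make `θ` superadditive, whence the tangent inequality
`∂₁θ(x,y) z + ∂₂θ(x,y) w ≥ θ(z,w)`, with equality at `(z,w) = (x,y)` (Euler). So each edge of a
four-cycle contributes at least `Θ/2` times its squared increment of `f`, where `Θ` is the sum of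
`θ` over the four edges; each diagonal contributes `-Θ/2` times its squared increment, and
the four edge squares minus the two diagonal squares equal `(f₀ - f₁ + f₂ - f₃)²`. -/

open Finset

/-- Partial derivative of `F : (V → ℝ) → ℝ` in the `i`-th coordinate at `p`. -/
noncomputable def pd {V : Type*} [DecidableEq V] (F : (V → ℝ) → ℝ) (i : V) (p : V → ℝ) : ℝ :=
  deriv (fun s => F (Function.update p i s)) (p i)

/-- The edge weight `θ_{ij}(p) = θ(p_i, p_j)` if `ij` is an edge, and `0` otherwise. -/
noncomputable def thM {V : Type*} (A : V → V → Prop) [DecidableRel A]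
    (θ : ℝ → ℝ → ℝ) (p : V → ℝ) (i j : V) : ℝ :=
  if A i j then θ (p i) (p j) else 0

/-- `η_{ij}(p) = θ_{ij}(p) (∂E/∂p_i − ∂E/∂p_j)`. -/
noncomputable def etaM {V : Type*} [DecidableEq V] (A : V → V → Prop) [DecidableRel A]
    (θ : ℝ → ℝ → ℝ) (E : (V → ℝ) → ℝ) (p : V → ℝ) (i j : V) : ℝ :=
  thM A θ p i j * (pd E i p - pd E j p)

/-- `Γ₁(p,f,f) = Σ_{i,j} θ_{ij}(p) (f_i − f_j)²`. -/
noncomputable def Gamma1 {V : Type*} [Fintype V] (A : V → V → Prop) [DecidableRel A]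
    (θ : ℝ → ℝ → ℝ) (p f : V → ℝ) : ℝ :=
  ∑ i, ∑ j, thM A θ p i j * (f i - f j)^2

/-- `Γ₂(p,f,f)`, the mean-field information Hessian quadratic form. -/
noncomputable def Gamma2 {V : Type*} [Fintype V] [DecidableEq V] (A : V → V → Prop)
    [DecidableRel A] (θ : ℝ → ℝ → ℝ) (E : (V → ℝ) → ℝ) (p f : V → ℝ) : ℝ :=
  (1/2) * ∑ i, ∑ j, ∑ k, (f i - f j)^2 *
    (pd (fun q => thM A θ q i j) i p * etaM A θ E p k i
      + pd (fun q => etaM A θ E q i j) i p * thM A θ p k i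
      + pd (fun q => etaM A θ E q j k) j p * thM A θ p i j
      - pd (fun q => etaM A θ E q k i) k p * thM A θ p j k)

/-- The weight function built from `U`: `θ(s,t) = (s−t)/(U'(s)−U'(t))` for `s ≠ t`,
and `θ(s,s) = 1/U''(s)`. -/
noncomputable def thetaU (U : ℝ → ℝ) (s t : ℝ) : ℝ :=
  if s = t then 1 / deriv (deriv U) s else (s - t) / (deriv U s - deriv U t)

/-- The entropy energy `E(p) = Σ_v U(p_v)`. -/
noncomputable def EnU {V : Type*} [Fintype V] (U : ℝ → ℝ) (p : V → ℝ) : ℝ := ∑ v, U (p v)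

/-- `Γ₂^{uv}(p,f,f)`, the single-edge contribution for the edge `uv`. -/
noncomputable def Gamma2edge {V : Type*} [Fintype V] [DecidableEq V] (A : V → V → Prop)
    [DecidableRel A] (θ : ℝ → ℝ → ℝ) (E : (V → ℝ) → ℝ) (p f : V → ℝ) (u v : V) : ℝ :=
  (f u - f v)^2 *
    (-(1/2) * (pd (fun q => thM A θ q u v) u p - pd (fun q => thM A θ q u v) v p)
        * etaM A θ E p u v
      + (pd (fun q => etaM A θ E q u v) u p - pd (fun q => etaM A θ E q u v) v p)
        * thM A θ p u v)

/-- The 4-cycle `C₄` with vertices `0,1,2,3` in cyclic order. -/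
def C4adj : Fin 4 → Fin 4 → Prop := fun i j => j = i + 1 ∨ i = j + 1

instance : DecidableRel C4adj := fun i j =>
  inferInstanceAs (Decidable (j = i + 1 ∨ i = j + 1))

/-- The complete graph `K₂` on two vertices. -/
def K2adj : Fin 2 → Fin 2 → Prop := fun i j => i ≠ j

instance : DecidableRel K2adj := fun i j => inferInstanceAs (Decidable (i ≠ j))

/-- The hypercube `Q_n` on the vertex set `{0,1}ⁿ`: two vertices are adjacent iff
they differ in exactly one coordinate (Hamming distance `1`). -/
def QnAdj (n : ℕ) : (Fin n → Fin 2) → (Fin n → Fin 2) → Prop :=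
  fun x y => (Finset.univ.filter fun i => x i ≠ y i).card = 1

instance (n : ℕ) : DecidableRel (QnAdj n) := fun x y =>
  inferInstanceAs (Decidable ((Finset.univ.filter fun i => x i ≠ y i).card = 1))

/-! ### The weight function -/

/-- The partial derivative `∂₁θ(x, y)`; by symmetry of `θ`, `∂₂θ(x, y) = d1 U y x`. -/
noncomputable def d1 (U : ℝ → ℝ) (x y : ℝ) : ℝ := deriv (fun s => thetaU U s y) x

lemma thetaU_symm (U : ℝ → ℝ) (s t : ℝ) : thetaU U s t = thetaU U t s := by
  unfold thetaU
  by_cases h : s = t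
  · simp [h]
  · rw [if_neg h, if_neg (Ne.symm h), ← neg_sub t s, ← neg_sub (deriv U t), neg_div_neg_eq]

/-- Positivity of `θ` rules out the junk value `U'(s) = U'(t)` for `s ≠ t`. -/
lemma thetaU_mul (U : ℝ → ℝ) (hθpos : ∀ s t : ℝ, 0 < s → 0 < t → 0 < thetaU U s t)
    (s t : ℝ) (hs : 0 < s) (ht : 0 < t) : thetaU U s t * (deriv U s - deriv U t) = s - t := by
  have h := hθpos s t hs ht
  unfold thetaU at h ⊢
  by_cases hst : s = t
  · simp [hst]
  · rw [if_neg hst] at h ⊢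
    have : deriv U s - deriv U t ≠ 0 := by
      intro h0
      simp [h0] at h
    field_simp

/-- The derivative of `θ` along a line, in terms of its partial derivatives. -/
lemma thetaU_dir (U : ℝ → ℝ)
    (hθC1 : ContDiffOn ℝ 1 (Function.uncurry (thetaU U)) {q : ℝ × ℝ | 0 < q.1 ∧ 0 < q.2})
    (x y z w : ℝ) (hx : 0 < x) (hy : 0 < y) :
    HasDerivAt (fun s : ℝ => thetaU U (x + s * z) (y + s * w)) (d1 U x y * z + d1 U y x * w) 0 := by
  have hopen : IsOpen {q : ℝ × ℝ | 0 < q.1 ∧ 0 < q.2} :=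
    (isOpen_lt continuous_const continuous_fst).inter (isOpen_lt continuous_const continuous_snd)
  have hd : DifferentiableAt ℝ (Function.uncurry (thetaU U)) (x, y) :=
    (hθC1.differentiableOn one_ne_zero).differentiableAt (hopen.mem_nhds ⟨hx, hy⟩)
  obtain ⟨L, hL⟩ := hd
  have e1 : d1 U x y = L (1, 0) := by
    have h1 : HasDerivAt (fun s : ℝ => (s, y)) ((1 : ℝ), (0 : ℝ)) x :=
      (hasDerivAt_id x).prodMk (hasDerivAt_const x y)
    exact (hL.comp_hasDerivAt x h1).deriv
  have e2 : d1 U y x = L (0, 1) := by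
    have h1 : HasDerivAt (fun s : ℝ => (x, s)) ((0 : ℝ), (1 : ℝ)) y :=
      (hasDerivAt_const y x).prodMk (hasDerivAt_id y)
    have h2 := (hL.comp_hasDerivAt y h1).deriv
    rw [← h2]
    unfold d1
    congr 1
    funext s
    exact thetaU_symm U s x
  have e3 : L (z, w) = d1 U x y * z + d1 U y x * w := by
    have : ((z, w) : ℝ × ℝ) = z • ((1 : ℝ), (0 : ℝ)) + w • ((0 : ℝ), (1 : ℝ)) := by simp
    rw [this, map_add, map_smul, map_smul, e1, e2]
    simp [mul_comm]
  rw [← e3]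
  have h1 : HasDerivAt (fun s : ℝ => (x + s * z, y + s * w)) (z, w) 0 := by
    have hz := ((hasDerivAt_id (0 : ℝ)).mul_const z).const_add x
    have hw := ((hasDerivAt_id (0 : ℝ)).mul_const w).const_add y
    simpa using hz.prodMk hw
  have hL' : HasFDerivAt (Function.uncurry (thetaU U)) L
      ((fun s : ℝ => (x + s * z, y + s * w)) 0) := by simpa using hL
  exact hL'.comp_hasDerivAt (0 : ℝ) h1

lemma thetaU_euler (U : ℝ → ℝ)
    (hθC1 : ContDiffOn ℝ 1 (Function.uncurry (thetaU U)) {q : ℝ × ℝ | 0 < q.1 ∧ 0 < q.2})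
    (hθhom : ∀ lam : ℝ, 0 < lam → ∀ s t : ℝ, 0 < s → 0 < t →
        thetaU U (lam * s) (lam * t) = lam * thetaU U s t)
    (x y : ℝ) (hx : 0 < x) (hy : 0 < y) :
    d1 U x y * x + d1 U y x * y = thetaU U x y := by
  have h := thetaU_dir U hθC1 x y x y hx hy
  have h2 : HasDerivAt (fun s : ℝ => (1 + s) * thetaU U x y) (thetaU U x y) 0 := by
    simpa using ((hasDerivAt_id (0 : ℝ)).const_add 1).mul_const (thetaU U x y)
  refine h.unique (h2.congr_of_eventuallyEq ?_)
  filter_upwards [lt_mem_nhds (show (-1 : ℝ) < 0 by norm_num)] with s hs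
  rw [← hθhom (1 + s) (by linarith) x y hx hy]
  congr 1 <;> ring

lemma thetaU_tangent (U : ℝ → ℝ)
    (hθC1 : ContDiffOn ℝ 1 (Function.uncurry (thetaU U)) {q : ℝ × ℝ | 0 < q.1 ∧ 0 < q.2})
    (hθhom : ∀ lam : ℝ, 0 < lam → ∀ s t : ℝ, 0 < s → 0 < t →
        thetaU U (lam * s) (lam * t) = lam * thetaU U s t)
    (hθconc : ConcaveOn ℝ {q : ℝ × ℝ | 0 < q.1 ∧ 0 < q.2} (Function.uncurry (thetaU U)))
    (x y z w : ℝ) (hx : 0 < x) (hy : 0 < y) (hz : 0 < z) (hw : 0 < w) :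
    thetaU U z w ≤ d1 U x y * z + d1 U y x * w := by
  have h := (thetaU_dir U hθC1 x y z w hx hy).tendsto_slope
  refine ge_of_tendsto (h.mono_left (nhdsWithin_mono 0 (s := Set.Ioi 0) ?_)) ?_
  · intro s hs
    exact ne_of_gt hs
  · filter_upwards [self_mem_nhdsWithin] with s hs
    have hs : 0 < s := hs
    have hsz : 0 < s * z := by positivity
    have hsw : 0 < s * w := by positivity
    have hc := hθconc.2 (show (x, y) ∈ {q : ℝ × ℝ | 0 < q.1 ∧ 0 < q.2} from ⟨hx, hy⟩)
      (show (s * z, s * w) ∈ {q : ℝ × ℝ | 0 < q.1 ∧ 0 < q.2} from ⟨hsz, hsw⟩)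
      (show (0 : ℝ) ≤ 1 / 2 by norm_num) (show (0 : ℝ) ≤ 1 / 2 by norm_num) (by norm_num)
    simp only [Function.uncurry, Prod.smul_mk, Prod.mk_add_mk, smul_eq_mul] at hc
    rw [← mul_add, ← mul_add, ← mul_add, hθhom (1 / 2) (by norm_num) _ _ (by positivity) (by positivity),
      hθhom s hs z w hz hw] at hc
    rw [slope_def_field, sub_zero, le_div_iff₀ hs]
    simp only [zero_mul, add_zero]
    linarith

/-! ### `Γ₂` with the derivatives of `η` evaluated -/

lemma pd_EnU {V : Type*} [Fintype V] [DecidableEq V] (U : ℝ → ℝ) (p : V → ℝ) (i : V) :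
    pd (EnU U) i p = deriv U (p i) := by
  unfold pd EnU
  have : (fun s => ∑ v, U (Function.update p i s v))
      = fun s => U s + ∑ v ∈ univ.erase i, U (p v) := by
    funext s
    rw [← Finset.add_sum_erase _ _ (mem_univ i)]
    congr 1
    · simp
    · refine Finset.sum_congr rfl fun v hv => ?_
      rw [Function.update_of_ne (Finset.ne_of_mem_erase hv)]
  rw [this, deriv_add_const]

lemma etaM_eq {V : Type*} [Fintype V] [DecidableEq V] (A : V → V → Prop) [DecidableRel A]
    (U : ℝ → ℝ) (hθpos : ∀ s t : ℝ, 0 < s → 0 < t → 0 < thetaU U s t)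
    (p : V → ℝ) (hp : ∀ v, 0 < p v) (i j : V) :
    etaM A (thetaU U) (EnU U) p i j = if A i j then p i - p j else 0 := by
  unfold etaM thM
  split_ifs
  · rw [pd_EnU, pd_EnU, thetaU_mul U hθpos _ _ (hp i) (hp j)]
  · simp

lemma pd_etaM {V : Type*} [Fintype V] [DecidableEq V] (A : V → V → Prop) [DecidableRel A]
    (hA : ∀ i, ¬ A i i)
    (U : ℝ → ℝ) (hθpos : ∀ s t : ℝ, 0 < s → 0 < t → 0 < thetaU U s t)
    (p : V → ℝ) (hp : ∀ v, 0 < p v) (i j : V) :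
    pd (fun q => etaM A (thetaU U) (EnU U) q i j) i p = if A i j then 1 else 0 := by
  unfold pd
  have h : (fun s => etaM A (thetaU U) (EnU U) (Function.update p i s) i j)
      =ᶠ[nhds (p i)] fun s => if A i j then s - p j else 0 := by
    filter_upwards [lt_mem_nhds (hp i)] with s hs
    rw [etaM_eq A U hθpos]
    · split_ifs with hij
      · have : j ≠ i := by
          rintro rfl
          exact hA _ hij
        simp [this]
      · rfl
    · intro v
      by_cases hv : v = i
      · subst hv
        simpa using hs
      · simpa [hv] using hp v
  rw [h.deriv_eq]
  split_ifs <;> simp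

lemma pd_thM {V : Type*} [DecidableEq V] (A : V → V → Prop) [DecidableRel A]
    (hA : ∀ i, ¬ A i i) (U : ℝ → ℝ) (p : V → ℝ) (i j : V) :
    pd (fun q => thM A (thetaU U) q i j) i p = if A i j then d1 U (p i) (p j) else 0 := by
  unfold pd thM
  split_ifs with hij
  · have : j ≠ i := by
      rintro rfl
      exact hA _ hij
    simp [this, d1]
  · simp

lemma Gamma2_eq {V : Type*} [Fintype V] [DecidableEq V] (A : V → V → Prop) [DecidableRel A]
    (hA : ∀ i, ¬ A i i)
    (U : ℝ → ℝ) (hθpos : ∀ s t : ℝ, 0 < s → 0 < t → 0 < thetaU U s t)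
    (p : V → ℝ) (hp : ∀ v, 0 < p v) (f : V → ℝ) :
    Gamma2 A (thetaU U) (EnU U) p f = (1/2) * ∑ i, ∑ j, ∑ k, (f i - f j)^2 *
    ((if A i j then d1 U (p i) (p j) else 0) * (if A k i then p k - p i else 0)
      + (if A i j then 1 else 0) * (if A k i then thetaU U (p k) (p i) else 0)
      + (if A j k then 1 else 0) * (if A i j then thetaU U (p i) (p j) else 0)
      - (if A k i then 1 else 0) * (if A j k then thetaU U (p j) (p k) else 0)) := by
  unfold Gamma2
  simp only [pd_thM A hA, pd_etaM A hA U hθpos p hp, etaM_eq A U hθpos p hp]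
  rfl

/-- The hypothesis on `K₂`, tested on the increment `f = (1, 0)`. -/
lemma K2_ineq (U : ℝ → ℝ) (hθpos : ∀ s t : ℝ, 0 < s → 0 < t → 0 < thetaU U s t) (κ : ℝ)
    (hK2 : ∀ p : Fin 2 → ℝ, (∀ i, 0 < p i) → ∀ f : Fin 2 → ℝ,
        κ * Gamma1 K2adj (thetaU U) p f ≤ Gamma2 K2adj (thetaU U) (EnU U) p f)
    (x y : ℝ) (hx : 0 < x) (hy : 0 < y) :
    κ * (4 * thetaU U x y) ≤
      d1 U x y * (y - x) + d1 U y x * (x - y) + 4 * thetaU U x y := by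
  have hp : ∀ i, 0 < (![x, y] : Fin 2 → ℝ) i := by
    intro i
    fin_cases i <;> simpa
  have h := hK2 ![x, y] hp ![1, 0]
  rw [Gamma2_eq K2adj (fun i hi => hi rfl) U hθpos _ hp] at h
  simp [Gamma1, thM, K2adj, Fin.sum_univ_two] at h
  rw [thetaU_symm U y x] at h
  linarith

/-! ### Sums over the hypercube -/

/-- The neighbour of the vertex `x` of the hypercube in direction `a`. -/
def flip' {n : ℕ} (a : Fin n) (x : Fin n → Fin 2) : Fin n → Fin 2 :=
  Function.update x a (x a + 1)

lemma flip'_flip' {n : ℕ} (a : Fin n) (x : Fin n → Fin 2) : flip' a (flip' a x) = x := by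
  have h : ∀ t : Fin 2, t + 1 + 1 = t := by decide
  simp [flip', h]

lemma flip'_comm {n : ℕ} (a b : Fin n) (x : Fin n → Fin 2) :
    flip' a (flip' b x) = flip' b (flip' a x) := by
  by_cases h : a = b
  · rw [h]
  · unfold flip'
    rw [Function.update_of_ne h, Function.update_of_ne (Ne.symm h), Function.update_comm h]

lemma flip'_apply_ne {n : ℕ} (a : Fin n) (x : Fin n → Fin 2) (i : Fin n) :
    x i ≠ flip' a x i ↔ i = a := by
  by_cases hi : i = a
  · subst hi
    simp [flip']
  · simp [flip', hi]

lemma QnAdj_iff {n : ℕ} (x y : Fin n → Fin 2) : QnAdj n x y ↔ ∃ a, flip' a x = y := by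
  unfold QnAdj
  rw [Finset.card_eq_one]
  refine exists_congr fun a => ?_
  constructor
  · intro h
    have h' : ∀ i, x i ≠ y i ↔ i = a := by
      intro i
      have := Finset.ext_iff.1 h i
      simpa using this
    have h2 : ∀ s t : Fin 2, s ≠ t → s + 1 = t := by decide
    funext i
    by_cases hi : i = a
    · subst hi
      simpa [flip'] using h2 _ _ ((h' i).2 rfl)
    · have := (h' i).not.2 hi
      simpa [flip', hi] using this
  · rintro rfl
    ext i
    simpa using flip'_apply_ne a x i

lemma QnAdj_symm {n : ℕ} (x y : Fin n → Fin 2) : QnAdj n x y ↔ QnAdj n y x := by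
  unfold QnAdj
  simp only [ne_comm]

lemma QnAdj_irrefl {n : ℕ} (x : Fin n → Fin 2) : ¬ QnAdj n x x := by
  simp [QnAdj]

lemma sum_adj {n : ℕ} (x : Fin n → Fin 2) (g : (Fin n → Fin 2) → ℝ) :
    ∑ y, (if QnAdj n x y then g y else 0) = ∑ a, g (flip' a x) := by
  rw [← Finset.sum_filter]
  symm
  refine Finset.sum_bij (fun a _ => flip' a x) ?_ ?_ ?_ ?_
  · intro a _
    simpa using (QnAdj_iff x _).2 ⟨a, rfl⟩
  · intro a _ b _ hab
    have h : flip' a x = flip' b x := hab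
    have h1 := (flip'_apply_ne a x a).2 rfl
    rw [h] at h1
    exact (flip'_apply_ne b x a).1 h1
  · intro y hy
    obtain ⟨a, ha⟩ := (QnAdj_iff x y).1 (by simpa using hy)
    exact ⟨a, mem_univ _, ha⟩
  · intro a _
    rfl

lemma sum_flip {n : ℕ} (a : Fin n) (g : (Fin n → Fin 2) → ℝ) :
    ∑ x, g (flip' a x) = ∑ x, g x :=
  Equiv.sum_comp (Function.Involutive.toPerm (flip' a) (flip'_flip' a)) g

/-- The contribution to `2 Γ₂` of the vertex `x` and the ordered pair of directions `(a, b)`: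
the terms of the edge `x ~ flip' a x` involving the neighbour `flip' b x` (with `θ(x, flip' a x)`
counted once per direction `b`), minus the diagonal term of the
path `x ~ flip' a x ~ flip' b (flip' a x)`. -/
noncomputable def W {n : ℕ} (U : ℝ → ℝ) (p f : (Fin n → Fin 2) → ℝ) (a b : Fin n)
    (x : Fin n → Fin 2) : ℝ :=
  (f x - f (flip' a x))^2 * (d1 U (p x) (p (flip' a x)) * (p (flip' b x) - p x)
      + thetaU U (p (flip' b x)) (p x) + thetaU U (p x) (p (flip' a x)))
    - (f x - f (flip' b (flip' a x)))^2 * thetaU U (p (flip' b (flip' a x))) (p (flip' a x))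

lemma Gamma1_cube {n : ℕ} (U : ℝ → ℝ) (p f : (Fin n → Fin 2) → ℝ) :
    Gamma1 (QnAdj n) (thetaU U) p f =
      ∑ a, ∑ x, thetaU U (p x) (p (flip' a x)) * (f x - f (flip' a x))^2 := by
  unfold Gamma1 thM
  rw [Finset.sum_comm (s := (univ : Finset (Fin n)))]
  refine Finset.sum_congr rfl fun x _ => ?_
  rw [← sum_adj x fun y => thetaU U (p x) (p y) * (f x - f y)^2]
  refine Finset.sum_congr rfl fun y _ => ?_
  split_ifs <;> simp

lemma Gamma2_cube {n : ℕ} (U : ℝ → ℝ) (hθpos : ∀ s t : ℝ, 0 < s → 0 < t → 0 < thetaU U s t)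
    (p : (Fin n → Fin 2) → ℝ) (hp : ∀ v, 0 < p v) (f : (Fin n → Fin 2) → ℝ) :
    Gamma2 (QnAdj n) (thetaU U) (EnU U) p f = (1/2) * ∑ a, ∑ b, ∑ x, W U p f a b x := by
  rw [Gamma2_eq _ QnAdj_irrefl U hθpos p hp]
  congr 1
  have hR : ∑ a, ∑ b, ∑ x, W U p f a b x = ∑ x, ∑ a, ∑ b, W U p f a b x := by
    rw [Finset.sum_comm (s := (univ : Finset (Fin n → Fin 2)))]
    refine Finset.sum_congr rfl fun a _ => ?_
    rw [Finset.sum_comm]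
  rw [hR]
  refine Finset.sum_congr rfl fun x _ => ?_
  -- terms through a neighbour `k` of `x`
  have h12 : ∑ j, ∑ k, (if QnAdj n x j then (if QnAdj n x k then
        (f x - f j)^2 * (d1 U (p x) (p j) * (p k - p x) + thetaU U (p k) (p x)) else 0) else 0)
      = ∑ a, ∑ b, (f x - f (flip' a x))^2 * (d1 U (p x) (p (flip' a x)) * (p (flip' b x) - p x)
        + thetaU U (p (flip' b x)) (p x)) := by
    rw [← sum_adj x fun j => ∑ b, (f x - f j)^2 * (d1 U (p x) (p j) * (p (flip' b x) - p x)
        + thetaU U (p (flip' b x)) (p x))]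
    refine Finset.sum_congr rfl fun j _ => ?_
    split_ifs
    · exact sum_adj x fun k => (f x - f j)^2 * (d1 U (p x) (p j) * (p k - p x)
        + thetaU U (p k) (p x))
    · simp
  -- terms through a neighbour `k` of `j`
  have h3 : ∑ j, ∑ k, (if QnAdj n x j then (if QnAdj n j k then
        (f x - f j)^2 * thetaU U (p x) (p j) else 0) else 0)
      = ∑ a, ∑ _b : Fin n, (f x - f (flip' a x))^2 * thetaU U (p x) (p (flip' a x)) := by
    rw [← sum_adj x fun j => ∑ _b : Fin n, (f x - f j)^2 * thetaU U (p x) (p j)]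
    refine Finset.sum_congr rfl fun j _ => ?_
    split_ifs
    · exact sum_adj j fun k => (f x - f j)^2 * thetaU U (p x) (p j)
    · simp
  -- paths `x ~ k ~ j`
  have h4 : ∑ j, ∑ k, (if QnAdj n x k then (if QnAdj n k j then
        (f x - f j)^2 * thetaU U (p j) (p k) else 0) else 0)
      = ∑ a, ∑ b, (f x - f (flip' b (flip' a x)))^2 *
        thetaU U (p (flip' b (flip' a x))) (p (flip' a x)) := by
    rw [Finset.sum_comm]
    rw [← sum_adj x fun k => ∑ b, (f x - f (flip' b k))^2 * thetaU U (p (flip' b k)) (p k)]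
    refine Finset.sum_congr rfl fun k _ => ?_
    split_ifs
    · exact sum_adj k fun j => (f x - f j)^2 * thetaU U (p j) (p k)
    · simp
  have hW : ∑ a, ∑ b, W U p f a b x = ∑ a, ∑ b, ((f x - f (flip' a x))^2 *
        (d1 U (p x) (p (flip' a x)) * (p (flip' b x) - p x) + thetaU U (p (flip' b x)) (p x)))
      + ∑ a, ∑ _b : Fin n, (f x - f (flip' a x))^2 * thetaU U (p x) (p (flip' a x))
      - ∑ a, ∑ b, (f x - f (flip' b (flip' a x)))^2 *
        thetaU U (p (flip' b (flip' a x))) (p (flip' a x)) := by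
    simp only [← Finset.sum_add_distrib, ← Finset.sum_sub_distrib]
    refine Finset.sum_congr rfl fun a _ => Finset.sum_congr rfl fun b _ => ?_
    unfold W
    ring
  rw [hW, ← h12, ← h3, ← h4]
  simp only [← Finset.sum_add_distrib, ← Finset.sum_sub_distrib]
  refine Finset.sum_congr rfl fun j _ => Finset.sum_congr rfl fun k _ => ?_
  simp only [QnAdj_symm k x, QnAdj_symm k j]
  split_ifs <;> ring

/-! ### The two kinds of direction pairs -/

/-- Nonnegativity of the contribution of a four-cycle `0 ~ 1 ~ 2 ~ 3 ~ 0`. Here `tij` stands for `θ(pᵢ, pⱼ)` and `eij` for the first-order change of `θ` when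
`(pᵢ, pⱼ)` moves to the values on the opposite edge; the bounds on `eij` come from the tangent
inequality and Euler's identity. -/
lemma square_ineq (f0 f1 f2 f3 t01 t12 t23 t30 e01 e12 e23 e30 : ℝ)
    (hpos : 0 ≤ t01 + t12 + t23 + t30)
    (h01 : t23 - t01 ≤ e01) (h12 : t30 - t12 ≤ e12) (h23 : t01 - t23 ≤ e23)
    (h30 : t12 - t30 ≤ e30) :
    0 ≤ (f0 - f1)^2 * (e01 + t30 + t12 + 2 * t01) + (f1 - f2)^2 * (e12 + t01 + t23 + 2 * t12)
      + (f2 - f3)^2 * (e23 + t12 + t30 + 2 * t23) + (f3 - f0)^2 * (e30 + t23 + t01 + 2 * t30)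
      - ((f0 - f2)^2 + (f1 - f3)^2) * (t01 + t12 + t23 + t30) := by
  have k1 := mul_nonneg (sq_nonneg (f0 - f1)) (sub_nonneg.2 h01)
  have k2 := mul_nonneg (sq_nonneg (f1 - f2)) (sub_nonneg.2 h12)
  have k3 := mul_nonneg (sq_nonneg (f2 - f3)) (sub_nonneg.2 h23)
  have k4 := mul_nonneg (sq_nonneg (f3 - f0)) (sub_nonneg.2 h30)
  have k5 := mul_nonneg (sq_nonneg (f0 - f1 + f2 - f3)) hpos
  linarith

/-- if `θ = thetaU U` is C¹, positive, positively 1-homogeneous and concave on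
`(0,∞)²`, and the curvature bound `Γ₂ ≥ κ Γ₁` holds on `K₂`, then it holds on the
hypercube `Q_n`. -/
theorem stmt16 (U : ℝ → ℝ)
    (hU : ContDiffOn ℝ 3 U (Set.Ioi 0))
    (hU'' : ∀ s : ℝ, 0 < s → 0 < deriv (deriv U) s)
    (hθC1 : ContDiffOn ℝ 1 (Function.uncurry (thetaU U)) {q : ℝ × ℝ | 0 < q.1 ∧ 0 < q.2})
    (hθpos : ∀ s t : ℝ, 0 < s → 0 < t → 0 < thetaU U s t)
    (hθhom : ∀ lam : ℝ, 0 < lam → ∀ s t : ℝ, 0 < s → 0 < t →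
        thetaU U (lam * s) (lam * t) = lam * thetaU U s t)
    (hθconc : ConcaveOn ℝ {q : ℝ × ℝ | 0 < q.1 ∧ 0 < q.2} (Function.uncurry (thetaU U)))
    (n : ℕ) (hn : 1 ≤ n) (κ : ℝ)
    (hK2 : ∀ p : Fin 2 → ℝ, (∀ i, 0 < p i) → ∀ f : Fin 2 → ℝ,
        κ * Gamma1 K2adj (thetaU U) p f ≤ Gamma2 K2adj (thetaU U) (EnU U) p f) :
    ∀ p : (Fin n → Fin 2) → ℝ, (∀ v, 0 < p v) → ∀ f : (Fin n → Fin 2) → ℝ,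
        κ * Gamma1 (QnAdj n) (thetaU U) p f ≤ Gamma2 (QnAdj n) (thetaU U) (EnU U) p f := by
  intro p hp f
  rw [Gamma1_cube, Gamma2_cube U hθpos p hp]
  -- parallel directions: average over the two ends of each edge
  have hdiag : ∀ a, 2 * (κ * ∑ x, thetaU U (p x) (p (flip' a x)) * (f x - f (flip' a x))^2)
      ≤ ∑ x, W U p f a a x := by
    intro a
    have hpt : 0 ≤ ∑ x, (W U p f a a x + W U p f a a (flip' a x)
        - 4 * κ * (thetaU U (p x) (p (flip' a x)) * (f x - f (flip' a x))^2)) := by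
      refine Finset.sum_nonneg fun x _ => ?_
      have h := mul_le_mul_of_nonneg_left
        (K2_ineq U hθpos κ hK2 (p x) (p (flip' a x)) (hp _) (hp _))
        (sq_nonneg (f x - f (flip' a x)))
      unfold W
      rw [flip'_flip', thetaU_symm U (p (flip' a x)) (p x)]
      linarith
    rw [Finset.sum_sub_distrib, Finset.sum_add_distrib, sum_flip a (W U p f a a),
      ← Finset.mul_sum] at hpt
    linarith
  -- transversal directions: average over the four vertices of each square
  have hoff : ∀ a b, 0 ≤ ∑ x, W U p f a b x + ∑ x, W U p f b a x := by
    intro a b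
    rw [← Finset.sum_add_distrib]
    set F := fun x => W U p f a b x + W U p f b a x with hF
    have hpt : 0 ≤ ∑ x, (F x + F (flip' a x) + F (flip' b x) + F (flip' a (flip' b x))) := by
      refine Finset.sum_nonneg fun x _ => ?_
      have hc : flip' b (flip' a x) = flip' a (flip' b x) := flip'_comm b a x
      have hc1 : flip' b (flip' a (flip' b x)) = flip' a x := by
        rw [← flip'_comm a b, flip'_flip']
      have hb0 := hp x
      have hb1 := hp (flip' a x)
      have hb2 := hp (flip' a (flip' b x))
      have hb3 := hp (flip' b x)
      simp only [hF, W, flip'_flip', hc, hc1]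
      generalize p x = p0 at *
      generalize p (flip' a x) = p1 at *
      generalize p (flip' a (flip' b x)) = p2 at *
      generalize p (flip' b x) = p3 at *
      have hs := thetaU_symm U
      have hT := thetaU_tangent U hθC1 hθhom hθconc
      have hE := thetaU_euler U hθC1 hθhom
      have key := square_ineq (f x) (f (flip' a x)) (f (flip' a (flip' b x))) (f (flip' b x))
        (thetaU U p0 p1) (thetaU U p1 p2) (thetaU U p2 p3) (thetaU U p3 p0)
        (d1 U p0 p1 * (p3 - p0) + d1 U p1 p0 * (p2 - p1))
        (d1 U p1 p2 * (p0 - p1) + d1 U p2 p1 * (p3 - p2))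
        (d1 U p2 p3 * (p1 - p2) + d1 U p3 p2 * (p0 - p3))
        (d1 U p3 p0 * (p2 - p3) + d1 U p0 p3 * (p1 - p0))
        (by linarith [hθpos p0 p1 hb0 hb1, hθpos p1 p2 hb1 hb2, hθpos p2 p3 hb2 hb3,
          hθpos p3 p0 hb3 hb0])
        (by linarith [hT p0 p1 p3 p2 hb0 hb1 hb3 hb2, hE p0 p1 hb0 hb1, hs p3 p2])
        (by linarith [hT p1 p2 p0 p3 hb1 hb2 hb0 hb3, hE p1 p2 hb1 hb2, hs p0 p3])
        (by linarith [hT p2 p3 p1 p0 hb2 hb3 hb1 hb0, hE p2 p3 hb2 hb3, hs p1 p0])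
        (by linarith [hT p3 p0 p2 p1 hb3 hb0 hb2 hb1, hE p3 p0 hb3 hb0, hs p2 p1])
      rw [hs p1 p0, hs p2 p1, hs p3 p2, hs p0 p3]
      linarith
    have hab : ∑ x, F (flip' a (flip' b x)) = ∑ x, F x := by
      rw [sum_flip b fun x => F (flip' a x), sum_flip a F]
    rw [Finset.sum_add_distrib, Finset.sum_add_distrib, Finset.sum_add_distrib, hab,
      sum_flip a F, sum_flip b F] at hpt
    linarith
  have hsplit : ∀ a b, (if a = b then
      2 * (2 * (κ * ∑ x, thetaU U (p x) (p (flip' a x)) * (f x - f (flip' a x))^2)) else 0)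
      ≤ ∑ x, W U p f a b x + ∑ x, W U p f b a x := by
    intro a b
    split_ifs with h
    · subst h
      linarith [hdiag a]
    · exact hoff a b
  have htot := Finset.sum_le_sum fun a (_ : a ∈ (univ : Finset (Fin n))) =>
    Finset.sum_le_sum fun b (_ : b ∈ (univ : Finset (Fin n))) => hsplit a b
  simp only [Finset.sum_ite_eq, mem_univ, if_true, Finset.sum_add_distrib, ← Finset.mul_sum]
    at htot
  rw [Finset.sum_comm (f := fun a b => ∑ x, W U p f b a x)] at htot
  linarith
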